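/- Let n_T, n_R, B ≥ 1 be integers, let S_Q ∈ ℂ^{B×B} and S_R ∈ ℂ^{n_R×n_R} be Hermitian positive definite, let R_T ∈ ℂ^{n_T×n_T} and R_R ∈ ℂ^{n_R×n_R} be Hermitian positive definite, let 𝓘_T ∈ ℂ^{n_T×n_T} be Hermitian positive semidefinite, and let c > 0. Assume 𝓘_R = R_R^{-1} and that c 𝓘_T − R_T^{-1} is positive semidefinite, and set R = R_T^T ⊗ R_R. For P ∈ ℂ^{n_T×B} set P̃ = P^T ⊗ I_{n_R}. Then R^{-1} + P̃^H (S_Q^T ⊗ S_R)^{-1} P̃ ⪰ c 𝓘_T^T ⊗ 𝓘_R holds if and only if P S_Q^{-1} P^H ⪰ λ_max(S_R^{1/2} 𝓘_R S_R^{1/2}) (c 𝓘_T − R_T^{-1}). (Theorem 3, case 𝓘_R = R_R^{-1}.) -/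

import Mathlib

open Matrix Finset
open scoped ComplexOrder Kronecker MatrixOrder

/-- The largest eigenvalue of a Hermitian matrix. -/
noncomputable def lmax {n : ℕ} {A : Matrix (Fin n) (Fin n) ℂ} (hA : A.IsHermitian) : ℝ :=
  ⨆ i, hA.eigenvalues i

/-! Since `R⁻¹ = (R_T⁻¹)ᵀ ⊗ 𝓘_R` and `P̃ᴴ (S_Qᵀ ⊗ S_R)⁻¹ P̃ = (P S_Q⁻¹ Pᴴ)ᵀ ⊗ S_R⁻¹`, the first
constraint reads `(P S_Q⁻¹ Pᴴ)ᵀ ⊗ S_R⁻¹ ⪰ (c 𝓘_T − R_T⁻¹)ᵀ ⊗ 𝓘_R`. Congruence by `I ⊗ S_R^{1/2}`,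
and then by `I ⊗ U` with `U` a unitary eigenbasis of `M = S_R^{1/2} 𝓘_R S_R^{1/2}`, turns it into
the block diagonal family `P S_Q⁻¹ Pᴴ ⪰ λᵢ (c 𝓘_T − R_T⁻¹)`, one inequality for each eigenvalue `λᵢ`
of `M`. As `c 𝓘_T − R_T⁻¹ ⪰ 0`, the inequality for the largest eigenvalue implies all the others. -/

section KroneckerAlgebra

variable {R k l m n p : Type*}

theorem sub_kronecker [NonUnitalNonAssocRing R] (A₁ A₂ : Matrix k l R) (B : Matrix n p R) :
    (A₁ - A₂) ⊗ₖ B = A₁ ⊗ₖ B - A₂ ⊗ₖ B := by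
  ext
  simp [sub_mul]

theorem blockDiagonal_eq_sum_kronecker_diagonal [NonAssocSemiring R] [Fintype m] [DecidableEq m]
    (A : m → Matrix k l R) :
    blockDiagonal A = ∑ i, A i ⊗ₖ diagonal (Pi.single i 1) := by
  ext ⟨a, i⟩ ⟨b, j⟩
  by_cases hij : i = j
  · simp [hij, Matrix.sum_apply, Pi.single_apply]
  · simp [hij, Matrix.sum_apply, blockDiagonal_apply_ne]

variable [CommRing R]

theorem kronecker_one_sub_kronecker_diagonal [DecidableEq m] (A D : Matrix k l R) (d : m → R) :
    A ⊗ₖ (1 : Matrix m m R) - D ⊗ₖ diagonal d = blockDiagonal fun i => A - d i • D := by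
  ext ⟨a, i⟩ ⟨b, j⟩
  by_cases hij : i = j
  · simp [hij, mul_comm]
  · simp [hij, blockDiagonal_apply_ne]

variable [StarRing R] [Fintype m]

theorem star_one_kronecker_mul_sub_mul [Fintype n] [DecidableEq n]
    (A D : Matrix n n R) (X Y W : Matrix m m R) :
    star ((1 : Matrix n n R) ⊗ₖ W) * (A ⊗ₖ X - D ⊗ₖ Y) * (1 ⊗ₖ W) =
      A ⊗ₖ (star W * X * W) - D ⊗ₖ (star W * Y * W) := by
  simp only [star_eq_conjTranspose, conjTranspose_kronecker, conjTranspose_one, Matrix.mul_sub,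
    Matrix.sub_mul, ← mul_kronecker_mul, Matrix.one_mul, Matrix.mul_one]

theorem conjTranspose_kronecker_one_mul_inv_kronecker_mul [DecidableEq m] [Fintype l]
    [DecidableEq l] (P : Matrix n l R) (Q : Matrix l l R) (S : Matrix m m R) :
    (Pᵀ ⊗ₖ (1 : Matrix m m R))ᴴ * (Qᵀ ⊗ₖ S)⁻¹ * (Pᵀ ⊗ₖ (1 : Matrix m m R)) =
      (P * Q⁻¹ * Pᴴ)ᵀ ⊗ₖ S⁻¹ := by
  have hP : (Pᵀ)ᴴ = (Pᴴ)ᵀ := rfl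
  rw [inv_kronecker, conjTranspose_kronecker, ← mul_kronecker_mul, ← mul_kronecker_mul,
    conjTranspose_one, Matrix.one_mul, Matrix.mul_one, hP]
  simp only [transpose_mul, transpose_nonsing_inv, Matrix.mul_assoc]

end KroneckerAlgebra

section KroneckerLoewner

variable {𝕜 n m : Type*} [RCLike 𝕜]

theorem posSemidef_sub_smul_of_le {A D : Matrix n n 𝕜} (hD : D.PosSemidef) {s t : ℝ} (hst : s ≤ t)
    (h : (A - t • D).PosSemidef) : (A - s • D).PosSemidef := by
  have hsplit : A - s • D = (A - t • D) + (t - s) • D := by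
    rw [sub_smul]
    abel
  rw [hsplit]
  exact h.add (hD.smul (sub_nonneg.2 hst))

variable [DecidableEq m]

section Finite

variable [Finite n] [Finite m]

theorem posSemidef_blockDiagonal_iff {A : m → Matrix n n 𝕜} :
    (blockDiagonal A).PosSemidef ↔ ∀ i, (A i).PosSemidef := by
  constructor
  · intro h i
    have hblock : A i = (blockDiagonal A).submatrix (·, i) (·, i) := by
      ext a b
      simp
    exact hblock ▸ h.submatrix (·, i)
  · intro h
    have := Fintype.ofFinite m
    rw [blockDiagonal_eq_sum_kronecker_diagonal]
    exact posSemidef_sum _ fun i _ =>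
      (h i).kronecker (.diagonal (Pi.single_nonneg.2 zero_le_one))

theorem posSemidef_kronecker_one_sub_kronecker_diagonal_iff [Nonempty m] {A D : Matrix n n 𝕜}
    (hD : D.PosSemidef) (e : m → ℝ) :
    (A ⊗ₖ (1 : Matrix m m 𝕜) - D ⊗ₖ diagonal (fun i => (e i : 𝕜))).PosSemidef ↔
      (A - (⨆ i, e i) • D).PosSemidef := by
  rw [kronecker_one_sub_kronecker_diagonal, posSemidef_blockDiagonal_iff]
  simp only [← RCLike.real_smul_eq_coe_smul]
  constructor
  · obtain ⟨i, hi⟩ := exists_eq_ciSup_of_finite (f := e)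
    exact fun h => hi ▸ h i
  · exact fun h i => posSemidef_sub_smul_of_le hD (le_ciSup (Set.finite_range e).bddAbove i) h

end Finite

variable [Fintype m]

theorem isUnit_sqrt_of_posDef {S : Matrix m m 𝕜} (hS : S.PosDef) : IsUnit (CFC.sqrt S) :=
  (CFC.isUnit_sqrt_iff S hS.posSemidef.nonneg).2 hS.isUnit

theorem sqrt_mul_inv_mul_sqrt {S : Matrix m m 𝕜} (hS : S.PosDef) :
    CFC.sqrt S * S⁻¹ * CFC.sqrt S = 1 := by
  have hsq : CFC.sqrt S * CFC.sqrt S = S := CFC.sqrt_mul_sqrt_self S hS.posSemidef.nonneg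
  have hdet : IsUnit (CFC.sqrt S).det := (isUnit_iff_isUnit_det _).1 (isUnit_sqrt_of_posDef hS)
  calc CFC.sqrt S * S⁻¹ * CFC.sqrt S
      = CFC.sqrt S * (CFC.sqrt S * CFC.sqrt S)⁻¹ * CFC.sqrt S := by rw [hsq]
    _ = (CFC.sqrt S * (CFC.sqrt S)⁻¹) * ((CFC.sqrt S)⁻¹ * CFC.sqrt S) := by
      simp only [Matrix.mul_inv_rev, Matrix.mul_assoc]
    _ = 1 := by rw [mul_nonsing_inv _ hdet, nonsing_inv_mul _ hdet, Matrix.one_mul]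

variable [Finite n]

theorem posSemidef_kronecker_sub_kronecker_star_conjugate_iff {W : Matrix m m 𝕜} (hW : IsUnit W)
    (A D : Matrix n n 𝕜) (X Y : Matrix m m 𝕜) :
    (A ⊗ₖ (star W * X * W) - D ⊗ₖ (star W * Y * W)).PosSemidef ↔
      (A ⊗ₖ X - D ⊗ₖ Y).PosSemidef := by
  classical
  have := Fintype.ofFinite n
  have hV : IsUnit ((1 : Matrix n n 𝕜) ⊗ₖ W) := isUnit_one.kronecker hW
  rw [← star_one_kronecker_mul_sub_mul, hV.posSemidef_star_left_conjugate_iff]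

theorem posSemidef_kronecker_one_sub_kronecker_iff [Nonempty m] {A D : Matrix n n 𝕜}
    (hD : D.PosSemidef) {M : Matrix m m 𝕜} (hM : M.IsHermitian) :
    (A ⊗ₖ (1 : Matrix m m 𝕜) - D ⊗ₖ M).PosSemidef ↔
      (A - (⨆ i, hM.eigenvalues i) • D).PosSemidef := by
  let U := hM.eigenvectorUnitary
  have hU : star (U : Matrix m m 𝕜) * 1 * U = 1 := by
    rw [Matrix.mul_one, Unitary.coe_star_mul_self]
  have hMU : star (U : Matrix m m 𝕜) * M * U = diagonal fun i => (hM.eigenvalues i : 𝕜) := by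
    have hspec := hM.conjStarAlgAut_star_eigenvectorUnitary
    rwa [Unitary.conjStarAlgAut_star_apply] at hspec
  rw [← posSemidef_kronecker_sub_kronecker_star_conjugate_iff (Unitary.toUnits U).isUnit,
    Unitary.val_toUnits_apply, hU, hMU, posSemidef_kronecker_one_sub_kronecker_diagonal_iff hD]

theorem posSemidef_kronecker_inv_sub_kronecker_iff [Nonempty m] {A D : Matrix n n 𝕜}
    (hD : D.PosSemidef) {S X : Matrix m m 𝕜} (hS : S.PosDef)
    (hM : (CFC.sqrt S * X * CFC.sqrt S).IsHermitian) :
    (A ⊗ₖ S⁻¹ - D ⊗ₖ X).PosSemidef ↔ (A - (⨆ i, hM.eigenvalues i) • D).PosSemidef := by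
  have hself : star (CFC.sqrt S) = CFC.sqrt S := (CFC.sqrt_nonneg S).isSelfAdjoint
  rw [← posSemidef_kronecker_one_sub_kronecker_iff hD hM,
    ← posSemidef_kronecker_sub_kronecker_star_conjugate_iff (isUnit_sqrt_of_posDef hS),
    hself, sqrt_mul_inv_mul_sqrt hS]

end KroneckerLoewner

theorem stmt4_general {𝕜 nT nR B : Type*} [RCLike 𝕜] [Fintype nT] [DecidableEq nT]
    [Fintype nR] [DecidableEq nR] [Nonempty nR] [Fintype B] [DecidableEq B]
    (SQ : Matrix B B 𝕜) [Invertible SQ]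
    {SR : Matrix nR nR 𝕜} (hSR : SR.PosDef)
    (RT : Matrix nT nT 𝕜) [Invertible RT]
    (RR : Matrix nR nR 𝕜) [Invertible RR]
    (IT : Matrix nT nT 𝕜) {IR : Matrix nR nR 𝕜} (hIR : IR = ⅟RR) (c : 𝕜)
    (hcIT : (c • IT - ⅟RT).PosSemidef) (P : Matrix nT B 𝕜)
    (hM : (CFC.sqrt SR * IR * CFC.sqrt SR).IsHermitian) :
    ((RTᵀ ⊗ₖ RR)⁻¹ +
        (Pᵀ ⊗ₖ (1 : Matrix nR nR 𝕜))ᴴ * (SQᵀ ⊗ₖ SR)⁻¹ * (Pᵀ ⊗ₖ (1 : Matrix nR nR 𝕜))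
      - c • (ITᵀ ⊗ₖ IR)).PosSemidef ↔
    (P * ⅟SQ * Pᴴ - (⨆ i, hM.eigenvalues i) • (c • IT - ⅟RT)).PosSemidef := by
  have hR : (RTᵀ ⊗ₖ RR)⁻¹ = (⅟RT)ᵀ ⊗ₖ IR := by
    rw [inv_kronecker, hIR, invOf_eq_nonsing_inv, invOf_eq_nonsing_inv, transpose_nonsing_inv]
  have hconstraint : (⅟RT)ᵀ ⊗ₖ IR + (P * ⅟SQ * Pᴴ)ᵀ ⊗ₖ SR⁻¹ - c • (ITᵀ ⊗ₖ IR) =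
      (P * ⅟SQ * Pᴴ)ᵀ ⊗ₖ SR⁻¹ - (c • IT - ⅟RT)ᵀ ⊗ₖ IR := by
    rw [transpose_sub, transpose_smul, sub_kronecker, smul_kronecker]
    abel
  rw [hR, conjTranspose_kronecker_one_mul_inv_kronecker_mul, ← invOf_eq_nonsing_inv SQ,
    hconstraint, posSemidef_kronecker_inv_sub_kronecker_iff hcIT.transpose hSR hM,
    ← transpose_smul, ← transpose_sub, posSemidef_transpose_iff]

/-- Theorem 3 (case `𝓘_R = R_R⁻¹`): with `R = R_Tᵀ ⊗ R_R`, `𝓘_R = R_R⁻¹`, and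
`c 𝓘_T − R_T⁻¹ ⪰ 0`, the constraint
`R⁻¹ + P̃ᴴ (S_Qᵀ ⊗ S_R)⁻¹ P̃ ⪰ c 𝓘_Tᵀ ⊗ 𝓘_R` (with `P̃ = Pᵀ ⊗ I`) holds iff
`P S_Q⁻¹ Pᴴ ⪰ λ_max(S_R^{1/2} 𝓘_R S_R^{1/2}) (c 𝓘_T − R_T⁻¹)`. -/
theorem stmt4 (nT nR B : ℕ) (hnT : 1 ≤ nT) (hnR : 1 ≤ nR) (hB : 1 ≤ B)
    (SQ : Matrix (Fin B) (Fin B) ℂ) (hSQ : SQ.PosDef)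
    (SR : Matrix (Fin nR) (Fin nR) ℂ) (hSR : SR.PosDef)
    (RT : Matrix (Fin nT) (Fin nT) ℂ) (hRT : RT.PosDef)
    (RR : Matrix (Fin nR) (Fin nR) ℂ) (hRR : RR.PosDef)
    (IT : Matrix (Fin nT) (Fin nT) ℂ) (hIT : IT.PosSemidef)
    (IR : Matrix (Fin nR) (Fin nR) ℂ) (hIR : IR.PosSemidef)
    (hIReq : IR = RR⁻¹)
    (c : ℝ) (hc : 0 < c)
    (hcIT : ((c : ℂ) • IT - RT⁻¹).PosSemidef)
    (P : Matrix (Fin nT) (Fin B) ℂ)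
    (hM : (CFC.sqrt SR * IR * CFC.sqrt SR).IsHermitian) :
    ((RTᵀ ⊗ₖ RR)⁻¹ +
        (Pᵀ ⊗ₖ (1 : Matrix (Fin nR) (Fin nR) ℂ))ᴴ * (SQᵀ ⊗ₖ SR)⁻¹ *
          (Pᵀ ⊗ₖ (1 : Matrix (Fin nR) (Fin nR) ℂ))
      - ((c : ℂ) • (ITᵀ ⊗ₖ IR))).PosSemidef ↔
    (P * SQ⁻¹ * Pᴴ - ((lmax hM : ℝ) : ℂ) • ((c : ℂ) • IT - RT⁻¹)).PosSemidef := by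
  have : Nonempty (Fin nR) := ⟨⟨0, hnR⟩⟩
  let := hSQ.isUnit.invertible
  let := hRT.isUnit.invertible
  let := hRR.isUnit.invertible
  simpa only [lmax, Complex.coe_smul, invOf_eq_nonsing_inv] using
    stmt4_general SQ hSR RT RR IT (by simpa) (c : ℂ) (by simpa) P hM
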